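/- arXiv:2306.12445 — 3 statements merged into one kernel-verified Lean document; each statement's English description precedes it below -/
import Mathlib

section
/- There exists a family (f_β)_{β ∈ I} of bijections of ℝ indexed by a set I of cardinality continuum such that: the group homomorphism from the free group on I to the symmetric group of ℝ sending each generator β to f_β is injective (i.e., the f_β freely generate a free subgroup of the group of autobijections of ℝ under composition), and every element of this subgroup other than the identity is a Hamel function (in particular each f_β itself is a Hamel function). -/
/-- The graph of a function `f : ℝ → ℝ`, as a subset of `ℝ × ℝ`. -/
def graph (f : ℝ → ℝ) : Set (ℝ × ℝ) := Set.range fun x => (x, f x)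

/-- `f : ℝ → ℝ` is a Hamel function if its graph is a basis of `ℝ × ℝ`
as a vector space over `ℚ`, i.e. the graph is `ℚ`-linearly independent and
spans `ℝ × ℝ` over `ℚ`. -/
def IsHamelFunction (f : ℝ → ℝ) : Prop :=
  LinearIndependent ℚ ((↑) : graph f → ℝ × ℝ) ∧
    Submodule.span ℚ (graph f) = ⊤

/-!
Let `G` be a group without involutions acting freely on `X`; free groups are torsion free. A
bijection `e : X ≃ V` transports the action to permutations of `V`, and `g` becomes the permutation
with graph `{(e x, e (g • x))}`. We build `e` by transfinite recursion from partial labellings of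
`X` with fewer than `#V` labels, keeping the partial graphs of all `g ≠ 1` linearly independent. A
new point of `X` receives a label outside the span of the old ones; a new label is put on an
untouched orbit; and a vector `(u, v)` is brought into the span of the graph of `g` by labelling `x`
and `g • x` on two untouched orbits, with generic `p, p'` on the first and `u - p, v - p'` on the
second. Since `g ≠ g⁻¹`, this adds to the graph of `g` only the two vectors `(p, p')` and
`(u - p, v - p')`, whose sum is `(u, v)`, and to the graphs of `h ≠ g, g⁻¹` nothing.
-/

open Cardinal Set Submodule

universe u

lemma mk_sum_sum_prod_prod {α β γ : Type u} (hβ : ℵ₀ ≤ #β) (hα : #α ≤ #β) (hγ : #γ ≤ #β) :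
    #(α ⊕ β ⊕ γ × β × β) = #β := by
  have hle : #α + (#β + #γ * (#β * #β)) ≤ #β := by
    rw [mul_eq_self hβ]
    exact add_le_of_le hβ hα (add_le_of_le hβ le_rfl (mul_le_of_le hβ hγ le_rfl))
  simp only [mk_sum, mk_prod, lift_id]
  exact hle.antisymm ((self_le_add_right _ _).trans (self_le_add_left _ _))

section Transfinite

lemma mk_union_lt_of_finite {α : Type u} {κ : Cardinal.{u}} (hκ : ℵ₀ ≤ κ) {s t : Set α}
    (hs : #s < κ) (ht : t.Finite) : #(s ∪ t : Set α) < κ :=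
  (mk_union_le s t).trans_lt (add_lt_of_lt hκ hs (ht.lt_aleph0.trans_le hκ))

lemma mk_biUnion_lt_of_finite {ι α : Type u} {κ : Cardinal.{u}} (hκ : ℵ₀ ≤ κ) {s : Set ι}
    {t : ι → Set α} (hs : #s < κ) (ht : ∀ i ∈ s, (t i).Finite) :
    #(⋃ i ∈ s, t i : Set α) < κ := by
  by_cases hfin : s.Finite
  · exact (hfin.biUnion ht).lt_aleph0.trans_le hκ
  · have hle : ⨆ i : s, #(t i) ≤ ℵ₀ := ciSup_le' fun i => (ht i i.2).lt_aleph0.le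
    calc #(⋃ i ∈ s, t i : Set α) ≤ #s * ⨆ i : s, #(t i) := mk_biUnion_le t s
      _ ≤ #s * ℵ₀ := by gcongr
      _ = #s := mul_aleph0_eq (infinite_coe_iff.2 hfin |> aleph0_le_mk_iff.2)
      _ < κ := hs

lemma exists_eq_biUnion_lt {τ α : Type*} [Preorder τ] [WellFoundedLT τ]
    (N : τ → Set α → Set α) : ∃ M : τ → Set α, ∀ t, M t = N t (⋃ s < t, M s) :=
  ⟨wellFounded_lt.fix fun t M => N t (⋃ s, ⋃ h : s < t, M s h), fun t => wellFounded_lt.fix_eq _ t⟩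

lemma accumulate_eq_biUnion_lt_union {τ α : Type*} [PartialOrder τ] (M : τ → Set α) (t : τ) :
    accumulate M t = (⋃ s < t, M s) ∪ M t := by
  simp only [accumulate_def, le_iff_lt_or_eq, iUnion_or, iUnion_union_distrib,
    iUnion_iUnion_eq_left]

lemma biUnion_lt_accumulate {τ α : Type*} [Preorder τ] (M : τ → Set α) (t : τ) :
    ⋃ s < t, accumulate M s = ⋃ s < t, M s := by
  refine Subset.antisymm (iUnion₂_subset fun s hs => iUnion₂_subset fun r hr => ?_)
    (iUnion₂_mono fun s _ => subset_accumulate)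
  exact subset_biUnion_of_mem (u := M) (hr.trans_lt hs)

theorem exists_forall_of_finite_extensions {α τ : Type u} (hτ : ℵ₀ ≤ #τ) {Good : Set α → Prop}
    {Sat : τ → Set α → Prop} (hmono : ∀ t, Monotone (Sat t))
    (hchain : ∀ C : Set (Set α), IsChain (· ⊆ ·) C → (∀ S ∈ C, Good S) → Good (⋃₀ C))
    (hext : ∀ t S, Good S → #S < #τ → ∃ N : Set α, N.Finite ∧ Good (S ∪ N) ∧ Sat t (S ∪ N)) :
    ∃ S, Good S ∧ ∀ t, Sat t S := by
  have hext' : ∀ t S, ∃ N : Set α, N.Finite ∧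
      (Good S → #S < #τ → Good (S ∪ N) ∧ Sat t (S ∪ N)) := by
    intro t S
    by_cases h : Good S ∧ #S < #τ
    · obtain ⟨N, hfin, hN⟩ := hext t S h.1 h.2
      exact ⟨N, hfin, fun _ _ => hN⟩
    · exact ⟨∅, finite_empty, fun hS hcard => (h ⟨hS, hcard⟩).elim⟩
  choose N hNfin hN using hext'
  obtain ⟨_, _, hord⟩ := exists_ord_eq_type_lt τ
  obtain ⟨M, hM⟩ := exists_eq_biUnion_lt N
  have hMfin (t : τ) : (M t).Finite := hM t ▸ hNfin t _
  have hchain_acc (T : Set τ) : IsChain (· ⊆ ·) (accumulate M '' T) :=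
    monotone_accumulate.isChain_range.mono (image_subset_range _ _)
  have hacc (t : τ) : Good (accumulate M t) ∧ Sat t (accumulate M t) := by
    induction t using WellFoundedLT.induction with
    | ind t ih =>
      have hgood : Good (⋃ s < t, M s) := by
        have h := hchain _ (hchain_acc (Iio t)) (forall_mem_image.2 fun s hs => (ih s hs).1)
        rw [sUnion_image] at h
        rwa [← biUnion_lt_accumulate]
      have hcard : #(⋃ s < t, M s : Set α) < #τ :=
        mk_biUnion_lt_of_finite hτ (mk_Iio_lt t hord) fun s _ => hMfin s
      rw [accumulate_eq_biUnion_lt_union, hM t]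
      exact hN t _ hgood hcard
  refine ⟨⋃₀ (accumulate M '' univ), hchain _ (hchain_acc _) ?_, fun t => ?_⟩
  · exact forall_mem_image.2 fun t _ => (hacc t).1
  · exact hmono t (subset_sUnion_of_mem (mem_image_of_mem _ (mem_univ t))) (hacc t).2

end Transfinite

lemma exists_mem_and_mem_of_directedOn {α : Type*} {C : Set (Set α)} (hC : DirectedOn (· ⊆ ·) C)
    {a b : α} (ha : a ∈ ⋃₀ C) (hb : b ∈ ⋃₀ C) : ∃ S ∈ C, a ∈ S ∧ b ∈ S := by
  obtain ⟨S, hS, haS⟩ := ha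
  obtain ⟨T, hT, hbT⟩ := hb
  obtain ⟨U, hU, hSU, hTU⟩ := hC S hS T hT
  exact ⟨U, hU, hSU haS, hTU hbT⟩

lemma injOn_sUnion_of_directedOn {α β : Type*} {f : α → β} {C : Set (Set α)}
    (hC : DirectedOn (· ⊆ ·) C) (h : ∀ S ∈ C, InjOn f S) : InjOn f (⋃₀ C) := by
  intro a ha b hb hab
  obtain ⟨S, hS, haS, hbS⟩ := exists_mem_and_mem_of_directedOn hC ha hb
  exact h S hS haS hbS hab

section LinearAlgebra

section Rank

variable {K : Type*} {V : Type u} [Ring K] [StrongRankCondition K] [AddCommGroup V] [Module K V]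

lemma exists_notMem_span_of_mk_lt_rank {s : Set V} (hs : #s < Module.rank K V) :
    ∃ v, v ∉ span K s := by
  by_contra! h
  have hrank := rank_span_le (R := K) s
  rw [(eq_top_iff' (p := span K s)).2 h, rank_top] at hrank
  exact hs.not_ge hrank

lemma exists_notMem_span_insert_insert {L : Set V} {κ : Cardinal.{u}} (hκ : ℵ₀ ≤ κ)
    (hrank : κ ≤ Module.rank K V) (hL : #L < κ) (u v : V) :
    ∃ p p', p ∉ span K (insert u (insert v L)) ∧
      p' ∉ span K (insert p (insert u (insert v L))) := by
  have key {t : Set V} (ht : t.Finite) : ∃ z, z ∉ span K (L ∪ t) :=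
    exists_notMem_span_of_mk_lt_rank ((mk_union_lt_of_finite hκ hL ht).trans_le hrank)
  obtain ⟨p, hp⟩ := key (toFinite {u, v})
  obtain ⟨p', hp'⟩ := key (toFinite {p, u, v})
  refine ⟨p, p', ?_, ?_⟩
  · rwa [union_comm, insert_union, singleton_union] at hp
  · rwa [union_comm, insert_union, insert_union, singleton_union] at hp'

end Rank

variable {K V : Type*} [DivisionRing K] [AddCommGroup V] [Module K V]

lemma linearIndepOn_id_union_of_subsingleton {s t : Set V} (hs : LinearIndepOn K id s)
    (ht : t.Subsingleton) (hts : ∀ v ∈ t, v ∉ span K s) : LinearIndepOn K id (s ∪ t) := by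
  rcases ht.eq_empty_or_singleton with rfl | ⟨v, rfl⟩
  · rwa [union_empty]
  · rw [union_singleton]
    exact hs.id_insert (hts v rfl)

lemma sub_ne_self_of_notMem [NeZero (2 : K)] {W : Submodule K V} {w z : V} (hw : w ∈ W)
    (hz : z ∉ W) : w - z ≠ z := fun h => by
  have htwo : (2 : K) • z = w := by rw [two_smul, ← sub_eq_iff_eq_add.1 h]
  exact hz ((W.smul_mem_iff two_ne_zero).1 (htwo ▸ hw))

end LinearAlgebra

section GroupTheory

lemma mk_freeGroup_le (α : Type u) : #(FreeGroup α) ≤ max #α ℵ₀ := by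
  cases isEmpty_or_nonempty α
  · exact mk_le_aleph0.trans (le_max_right _ _)
  · exact (mk_freeGroup α).le

lemma mk_le_mk_of_isCancelSMul (G X : Type u) [Group G] [MulAction G X] [IsCancelSMul G X]
    [Nonempty X] : #G ≤ #X :=
  mk_le_of_injective (f := (· • Classical.arbitrary X)) fun g h => IsCancelSMul.right_cancel g h _

instance isCancelSMul_sigma {ι G : Type*} {α : ι → Type*} [Group G] [∀ i, MulAction G (α i)]
    [∀ i, IsCancelSMul G (α i)] : IsCancelSMul G (Σ i, α i) where
  right_cancel' g h := fun ⟨i, a⟩ hgh => by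
    simp only [Sigma.smul_mk, Sigma.mk.injEq, heq_eq_eq, true_and] at hgh
    exact IsCancelSMul.right_cancel g h a hgh

lemma mk_le_mk_quotient_sigma {ι : Type u} {G : Type*} (α : ι → Type u) [Group G]
    [∀ i, MulAction G (α i)] [∀ i, Nonempty (α i)] :
    #ι ≤ #(MulAction.orbitRel.Quotient G (Σ i, α i)) := by
  let index : MulAction.orbitRel.Quotient G (Σ i, α i) → ι :=
    Quotient.lift Sigma.fst (by rintro _ ⟨i, a⟩ ⟨g, rfl⟩; rfl)
  exact mk_le_of_surjective (f := index) fun i =>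
    ⟨Quotient.mk _ ⟨i, Classical.arbitrary (α i)⟩, rfl⟩

lemma exists_forall_smul_notMem {G : Type*} {X : Type u} [Group G] [MulAction G X] {D : Set X}
    (hD : #D < #(MulAction.orbitRel.Quotient G X)) : ∃ x, ∀ g : G, g • x ∉ D := by
  let orbit : X → MulAction.orbitRel.Quotient G X := Quotient.mk _
  obtain ⟨q, hq⟩ : ∃ q, q ∉ orbit '' D := by
    by_contra! h
    exact hD.not_ge (mk_univ.symm.trans_le (eq_univ_of_forall h ▸ mk_image_le))
  obtain ⟨x, rfl⟩ := Quotient.mk_surjective q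
  exact ⟨x, fun g hg => hq ⟨g • x, hg, MulAction.orbitRel.Quotient.quotient_smul_eq⟩⟩

end GroupTheory

section ConjGraph

variable {G X V : Type*}

/-- The relation on `V` obtained by transporting the action of `g : G` on `X` along a partial
labelling `S` of points of `X` by elements of `V`, given as a set of pairs (point, label). When `S`
is the graph of a bijection `e`, this is the graph of the permutation `e ∘ (g • ·) ∘ e⁻¹`. -/
def conjGraph [SMul G X] (S : Set (X × V)) (g : G) : Set (V × V) :=
  {q | ∃ x, (x, q.1) ∈ S ∧ (g • x, q.2) ∈ S}

lemma conjGraph_mono [SMul G X] (g : G) : Monotone fun S : Set (X × V) => conjGraph S g :=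
  fun _ _ h _ ⟨x, h₁, h₂⟩ => ⟨x, h h₁, h h₂⟩

lemma conjGraph_subset_prod [SMul G X] (S : Set (X × V)) (g : G) :
    conjGraph S g ⊆ (Prod.snd '' S) ×ˢ (Prod.snd '' S) :=
  fun _ ⟨_, h₁, h₂⟩ => ⟨mem_image_of_mem Prod.snd h₁, mem_image_of_mem Prod.snd h₂⟩

lemma conjGraph_inv [Group G] [MulAction G X] (S : Set (X × V)) (g : G) :
    conjGraph S g⁻¹ = Prod.swap '' conjGraph S g := by
  ext ⟨a, b⟩
  rw [image_swap_eq_preimage_swap]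
  constructor
  · rintro ⟨x, h₁, h₂⟩
    exact ⟨g⁻¹ • x, h₂, by rwa [smul_inv_smul]⟩
  · rintro ⟨x, h₁, h₂⟩
    exact ⟨g • x, h₂, by rwa [inv_smul_smul]⟩

lemma conjGraph_sUnion [SMul G X] {C : Set (Set (X × V))} (hC : DirectedOn (· ⊆ ·) C) (g : G) :
    conjGraph (⋃₀ C) g = ⋃ S ∈ C, conjGraph S g := by
  refine Subset.antisymm ?_ (iUnion₂_subset fun S hS => conjGraph_mono g (subset_sUnion_of_mem hS))
  rintro q ⟨x, h₁, h₂⟩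
  obtain ⟨S, hS, h₁S, h₂S⟩ := exists_mem_and_mem_of_directedOn hC h₁ h₂
  exact mem_biUnion hS ⟨x, h₁S, h₂S⟩

lemma conjGraph_insert [Group G] [MulAction G X] (S : Set (X × V)) {g : G} {x : X} (p : V)
    (hx : g • x ≠ x) : conjGraph (insert (x, p) S) g =
      conjGraph S g ∪ {p} ×ˢ (Prod.mk (g • x) ⁻¹' S) ∪ (Prod.mk (g⁻¹ • x) ⁻¹' S) ×ˢ {p} := by
  ext ⟨a, b⟩
  simp only [conjGraph, mem_union, mem_prod, mem_singleton_iff, mem_preimage, mem_insert_iff,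
    Prod.mk.injEq, mem_ofPred_eq]
  constructor
  · rintro ⟨y, ⟨rfl, rfl⟩ | h₁, ⟨h₂, rfl⟩ | h₂⟩
    · exact absurd h₂ hx
    · exact .inl (.inr ⟨rfl, h₂⟩)
    · exact .inr ⟨by rwa [← h₂, inv_smul_smul], rfl⟩
    · exact .inl (.inl ⟨y, h₁, h₂⟩)
  · rintro ((⟨y, h₁, h₂⟩ | ⟨rfl, h₂⟩) | ⟨h₁, rfl⟩)
    · exact ⟨y, .inr h₁, .inr h₂⟩
    · exact ⟨x, .inl ⟨rfl, rfl⟩, .inr h₂⟩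
    · exact ⟨g⁻¹ • x, .inr h₁, .inl ⟨smul_inv_smul g x, rfl⟩⟩

lemma conjGraph_graphOn_univ [SMul G X] (e : X ≃ V) (g : G) :
    conjGraph (univ.graphOn e) g = univ.graphOn fun v => e (g • e.symm v) := by
  ext ⟨a, b⟩
  simp only [conjGraph, mem_graphOn, mem_univ, true_and, mem_ofPred_eq]
  constructor
  · rintro ⟨x, rfl, rfl⟩
    rw [e.symm_apply_apply]
  · rintro rfl
    exact ⟨e.symm a, e.apply_symm_apply a, rfl⟩

section Fresh

variable [Group G] [MulAction G X] [IsCancelSMul G X] {S : Set (X × V)} {x : X} {g h : G}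

lemma conjGraph_insert_of_fresh (hx : ∀ k : G, k • x ∉ Prod.fst '' S) (hg : g ≠ 1) (p : V) :
    conjGraph (insert (x, p) S) g = conjGraph S g := by
  have hlabels (k : G) : Prod.mk (k • x) ⁻¹' S = ∅ :=
    eq_empty_of_forall_notMem fun a ha => hx k (mem_image_of_mem Prod.fst ha)
  rw [conjGraph_insert S p fun h => hg (IsCancelSMul.eq_one_of_smul h), hlabels, hlabels,
    prod_empty, empty_prod, union_empty, union_empty]

lemma labels_insert_of_fresh (hx : ∀ k : G, k • x ∉ Prod.fst '' S) (k : G) (p : V) :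
    Prod.mk (k • x) ⁻¹' (insert (x, p) S) = {a | k = 1 ∧ a = p} := by
  ext a
  have ha : (k • x, a) ∉ S := fun h => hx k (mem_image_of_mem Prod.fst h)
  have hk : k • x = x ↔ k = 1 := ⟨IsCancelSMul.eq_one_of_smul, fun h => h ▸ one_smul G x⟩
  simp only [mem_preimage, mem_insert_iff, Prod.mk.injEq, ha, hk, or_false, mem_ofPred_eq]

lemma conjGraph_insert_insert_of_fresh (hx : ∀ k : G, k • x ∉ Prod.fst '' S) (p p' : V)
    (hh : h ≠ 1) : conjGraph (insert (g • x, p') (insert (x, p) S)) h =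
      conjGraph S h ∪ {p'} ×ˢ {a | h * g = 1 ∧ a = p} ∪ {a | h⁻¹ * g = 1 ∧ a = p} ×ˢ {p'} := by
  rw [conjGraph_insert _ p' fun hgx => hh (IsCancelSMul.eq_one_of_smul hgx),
    conjGraph_insert_of_fresh hx hh, smul_smul, smul_smul, labels_insert_of_fresh hx,
    labels_insert_of_fresh hx]

lemma conjGraph_insert_insert_self (hx : ∀ k : G, k • x ∉ Prod.fst '' S) (p p' : V)
    (hg : g ≠ g⁻¹) :
    conjGraph (insert (g • x, p') (insert (x, p) S)) g = insert (p, p') (conjGraph S g) := by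
  have hg1 : g ≠ 1 := fun h => hg (by rw [h, inv_one])
  have hgg : g * g ≠ 1 := fun h => hg (eq_inv_of_mul_eq_one_left h)
  simp [conjGraph_insert_insert_of_fresh hx p p' hg1, hgg]

lemma conjGraph_insert_insert_of_ne (hx : ∀ k : G, k • x ∉ Prod.fst '' S) (p p' : V)
    (hh : h ≠ 1) (hhg : h ≠ g) (hhg' : h ≠ g⁻¹) :
    conjGraph (insert (g • x, p') (insert (x, p) S)) h = conjGraph S h := by
  have h₁ : h * g ≠ 1 := fun H => hhg' (eq_inv_of_mul_eq_one_left H)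
  have h₂ : h⁻¹ * g ≠ 1 := fun H => hhg (inv_mul_eq_one.1 H)
  simp [conjGraph_insert_insert_of_fresh hx p p' hh, h₁, h₂]

end Fresh

end ConjGraph

section Module

variable {K G X V : Type*} [DivisionRing K] [AddCommGroup V] [Module K V]

lemma span_conjGraph_le [SMul G X] (S : Set (X × V)) (g : G) :
    span K (conjGraph S g) ≤ (span K (Prod.snd '' S)).prod (span K (Prod.snd '' S)) :=
  span_le.2 ((conjGraph_subset_prod S g).trans (prod_mono subset_span subset_span))

lemma linearIndepOn_conjGraph_inv [Group G] [MulAction G X] {S : Set (X × V)} {g : G}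
    (h : LinearIndepOn K id (conjGraph S g)) : LinearIndepOn K id (conjGraph S g⁻¹) := by
  rw [conjGraph_inv]
  exact (h.map_injOn (LinearEquiv.prodComm K V V).toLinearMap
    (LinearEquiv.prodComm K V V).injective.injOn).id_image

variable (K G) in
/-- A partial labelling of points of the `G`-set `X` by vectors, given as a set of pairs
(point, label): distinct points carry distinct labels, and every `g ≠ 1` induces a
linearly independent partial graph on the labels. A bijective labelling of this kind turns each
`g ≠ 1` into a permutation of `V` with linearly independent graph. -/
structure IsHamelLabelling [Group G] [MulAction G X] (S : Set (X × V)) : Prop where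
  injOn_fst : InjOn Prod.fst S
  injOn_snd : InjOn Prod.snd S
  linearIndepOn : ∀ g : G, g ≠ 1 → LinearIndepOn K id (conjGraph S g)

namespace IsHamelLabelling

variable [Group G] [MulAction G X] {S : Set (X × V)} {x : X} {p p' : V} {g : G}

lemma sUnion {C : Set (Set (X × V))} (hC : DirectedOn (· ⊆ ·) C)
    (h : ∀ S ∈ C, IsHamelLabelling K G S) : IsHamelLabelling K G (⋃₀ C) where
  injOn_fst := injOn_sUnion_of_directedOn hC fun S hS => (h S hS).injOn_fst
  injOn_snd := injOn_sUnion_of_directedOn hC fun S hS => (h S hS).injOn_snd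
  linearIndepOn g hg := by
    rw [conjGraph_sUnion hC]
    exact linearIndepOn_biUnion_of_directed
      (hC.mono fun _ _ hST => conjGraph_mono g hST) fun S hS => (h S hS).linearIndepOn g hg

lemma subsingleton_labels (hS : IsHamelLabelling K G S) (x : X) :
    (Prod.mk x ⁻¹' S).Subsingleton := fun _ ha _ hb =>
  congrArg Prod.snd (hS.injOn_fst ha hb rfl)

variable [IsCancelSMul G X]

lemma insert_of_notMem_span (hS : IsHamelLabelling K G S) (hx : x ∉ Prod.fst '' S)
    (hp : p ∉ span K (Prod.snd '' S)) : IsHamelLabelling K G (insert (x, p) S) := by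
  have hpS : p ∉ Prod.snd '' S := fun h => hp (subset_span h)
  have hxpS : (x, p) ∉ S := fun h => hx (mem_image_of_mem _ h)
  refine ⟨(injOn_insert hxpS).2 ⟨hS.injOn_fst, hx⟩, (injOn_insert hxpS).2 ⟨hS.injOn_snd, hpS⟩,
    fun g hg => ?_⟩
  rw [conjGraph_insert S p fun h => hg (IsCancelSMul.eq_one_of_smul h)]
  refine linearIndepOn_id_union_of_subsingleton (linearIndepOn_id_union_of_subsingleton
    (hS.linearIndepOn g hg) (subsingleton_singleton.prod (hS.subsingleton_labels _)) ?_)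
    ((hS.subsingleton_labels _).prod subsingleton_singleton) ?_
  · rintro q ⟨rfl, -⟩ hq
    exact hp (span_conjGraph_le S g hq).1
  · rintro q ⟨-, rfl⟩ hq
    have hle : span K (conjGraph S g ∪ {q.2} ×ˢ (Prod.mk (g • x) ⁻¹' S)) ≤
        (⊤ : Submodule K V).prod (span K (Prod.snd '' S)) :=
      span_le.2 <| union_subset
        (fun r hr => ⟨trivial, subset_span (conjGraph_subset_prod S g hr).2⟩)
        (fun r hr => ⟨trivial, subset_span (mem_image_of_mem Prod.snd hr.2)⟩)
    exact hp (hle hq).2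

lemma insert_of_fresh (hS : IsHamelLabelling K G S) (hx : ∀ h : G, h • x ∉ Prod.fst '' S)
    (hp : p ∉ Prod.snd '' S) : IsHamelLabelling K G (insert (x, p) S) := by
  have hxS : x ∉ Prod.fst '' S := by simpa only [one_smul] using hx 1
  have hxpS : (x, p) ∉ S := fun h => hp (mem_image_of_mem _ h)
  refine ⟨(injOn_insert hxpS).2 ⟨hS.injOn_fst, hxS⟩, (injOn_insert hxpS).2 ⟨hS.injOn_snd, hp⟩,
    fun g hg => ?_⟩
  rw [conjGraph_insert_of_fresh hx hg]
  exact hS.linearIndepOn g hg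

lemma insert_insert_of_fresh (hS : IsHamelLabelling K G S)
    (hx : ∀ h : G, h • x ∉ Prod.fst '' S) (hg : g ≠ g⁻¹) (hp : p ∉ Prod.snd '' S)
    (hp' : p' ∉ Prod.snd '' S) (hpp' : p' ≠ p) (hspan : (p, p') ∉ span K (conjGraph S g)) :
    IsHamelLabelling K G (insert (g • x, p') (insert (x, p) S)) := by
  have hS₁ := hS.insert_of_fresh hx hp
  have hgx : g • x ∉ Prod.fst '' insert (x, p) S := by
    rw [image_insert_eq, mem_insert_iff, not_or]
    exact ⟨fun h => hg (by rw [IsCancelSMul.eq_one_of_smul h, inv_one]), hx g⟩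
  have hp'₁ : p' ∉ Prod.snd '' insert (x, p) S := by
    rw [image_insert_eq, mem_insert_iff, not_or]
    exact ⟨hpp', hp'⟩
  have hnotMem : (g • x, p') ∉ insert (x, p) S := fun h => hgx (mem_image_of_mem _ h)
  have hindep : LinearIndepOn K id (conjGraph (insert (g • x, p') (insert (x, p) S)) g) := by
    rw [conjGraph_insert_insert_self hx p p' hg]
    exact (hS.linearIndepOn g fun h => hg (by rw [h, inv_one])).id_insert hspan
  refine ⟨(injOn_insert hnotMem).2 ⟨hS₁.injOn_fst, hgx⟩,
    (injOn_insert hnotMem).2 ⟨hS₁.injOn_snd, hp'₁⟩, fun h hh => ?_⟩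
  obtain rfl | hhg := eq_or_ne h g
  · exact hindep
  obtain rfl | hhg' := eq_or_ne h g⁻¹
  · exact linearIndepOn_conjGraph_inv hindep
  · rw [conjGraph_insert_insert_of_ne hx p p' hh hhg hhg']
    exact hS.linearIndepOn h hh

end IsHamelLabelling
end Module

section Extension

variable {K : Type*} {G X V : Type u} [DivisionRing K] [AddCommGroup V] [Module K V]
  [Group G] [MulAction G X] [IsCancelSMul G X] {S : Set (X × V)} {g : G}

namespace IsHamelLabelling

lemma exists_union_mem_image_fst (hS : IsHamelLabelling K G S) (hcard : #S < Module.rank K V)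
    (x : X) : ∃ N : Set (X × V),
      N.Finite ∧ IsHamelLabelling K G (S ∪ N) ∧ x ∈ Prod.fst '' (S ∪ N) := by
  by_cases hx : x ∈ Prod.fst '' S
  · exact ⟨∅, finite_empty, by rwa [union_empty], by rwa [union_empty]⟩
  · obtain ⟨p, hp⟩ := exists_notMem_span_of_mk_lt_rank (mk_image_le.trans_lt hcard)
    refine ⟨{(x, p)}, finite_singleton _, ?_, (x, p), .inr rfl, rfl⟩
    rw [union_singleton]
    exact hS.insert_of_notMem_span hx hp

lemma exists_union_mem_image_snd (hS : IsHamelLabelling K G S)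
    (hcard : #S < #(MulAction.orbitRel.Quotient G X)) (p : V) : ∃ N : Set (X × V),
      N.Finite ∧ IsHamelLabelling K G (S ∪ N) ∧ p ∈ Prod.snd '' (S ∪ N) := by
  by_cases hp : p ∈ Prod.snd '' S
  · exact ⟨∅, finite_empty, by rwa [union_empty], by rwa [union_empty]⟩
  · obtain ⟨x, hx⟩ := exists_forall_smul_notMem (mk_image_le.trans_lt hcard)
    refine ⟨{(x, p)}, finite_singleton _, ?_, (x, p), .inr rfl, rfl⟩
    rw [union_singleton]
    exact hS.insert_of_fresh hx hp

lemma exists_union_conjGraph_eq_insert {p p' : V} (hS : IsHamelLabelling K G S)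
    (hcard : #S < #(MulAction.orbitRel.Quotient G X)) (hg : g ≠ g⁻¹) (hp : p ∉ Prod.snd '' S)
    (hp' : p' ∉ Prod.snd '' S) (hpp' : p' ≠ p) (hspan : (p, p') ∉ span K (conjGraph S g)) :
    ∃ N : Set (X × V), N.Finite ∧ IsHamelLabelling K G (S ∪ N) ∧
      conjGraph (S ∪ N) g = insert (p, p') (conjGraph S g) ∧
      Prod.snd '' (S ∪ N) = insert p' (insert p (Prod.snd '' S)) := by
  obtain ⟨x, hx⟩ := exists_forall_smul_notMem (G := G) (mk_image_le.trans_lt hcard)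
  refine ⟨{(g • x, p'), (x, p)}, toFinite _, ?_⟩
  rw [union_comm, insert_union, singleton_union]
  exact ⟨hS.insert_insert_of_fresh hx hg hp hp' hpp' hspan,
    conjGraph_insert_insert_self hx p p' hg, by rw [image_insert_eq, image_insert_eq]⟩

/-- The first of the two steps that bring `(u, v)` into the span of `conjGraph S g`: the graph
acquires a vector `(p, p')` whose complement `(u - p, v - p')` may be added next. -/
lemma exists_union_sub_notMem_image_snd [NeZero (2 : K)] {κ : Cardinal.{u}} (hκ : ℵ₀ ≤ κ)
    (hrank : κ ≤ Module.rank K V) (horbits : κ ≤ #(MulAction.orbitRel.Quotient G X))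
    (hS : IsHamelLabelling K G S) (hcard : #S < κ) (hg : g ≠ g⁻¹) (u v : V) :
    ∃ (N : Set (X × V)) (p p' : V), N.Finite ∧ IsHamelLabelling K G (S ∪ N) ∧
      (p, p') ∈ conjGraph (S ∪ N) g ∧ u - p ∉ Prod.snd '' (S ∪ N) ∧
      v - p' ∉ Prod.snd '' (S ∪ N) ∧ v - p' ≠ u - p := by
  set L := Prod.snd '' S
  obtain ⟨p, p', hp, hp'⟩ :=
    exists_notMem_span_insert_insert hκ hrank (mk_image_le.trans_lt hcard : #L < κ) u v
  set W := span K (insert u (insert v L))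
  set W' := span K (insert p (insert u (insert v L)))
  have hWW' : W ≤ W' := span_mono (subset_insert _ _)
  have hu : u ∈ W := subset_span (mem_insert _ _)
  have hv : v ∈ W' := hWW' (subset_span (mem_insert_of_mem _ (mem_insert _ _)))
  have hpW' : p ∈ W' := subset_span (mem_insert _ _)
  have hLW : span K L ≤ W := span_mono ((subset_insert _ _).trans (subset_insert _ _))
  have hL {z : V} (hz : z ∈ L) : z ∈ W := hLW (subset_span hz)
  obtain ⟨N, hN, hSN, hgraph, hlabels⟩ := hS.exists_union_conjGraph_eq_insert
    (hcard.trans_le horbits) hg (fun h => hp (hL h)) (fun h => hp' (hWW' (hL h)))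
    (fun h => hp' (h ▸ hpW')) fun h => hp (hLW (span_conjGraph_le S g h).1)
  refine ⟨N, p, p', hN, hSN, hgraph ▸ mem_insert _ _, ?_, ?_, fun h => ?_⟩
  · rw [hlabels, mem_insert_iff, mem_insert_iff, not_or, not_or]
    exact ⟨fun h => hp' (h ▸ W'.sub_mem (hWW' hu) hpW'), sub_ne_self_of_notMem hu hp,
      fun h => hp ((W.sub_mem_iff_right hu).1 (hL h))⟩
  · rw [hlabels, mem_insert_iff, mem_insert_iff, not_or, not_or]
    exact ⟨sub_ne_self_of_notMem hv hp', fun h => hp' ((W'.sub_mem_iff_right hv).1 (h ▸ hpW')),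
      fun h => hp' ((W'.sub_mem_iff_right hv).1 (hWW' (hL h)))⟩
  · exact hp' ((W'.sub_mem_iff_right hv).1 (h ▸ W'.sub_mem (hWW' hu) hpW'))

lemma exists_union_mem_span_conjGraph [NeZero (2 : K)] {κ : Cardinal.{u}} (hκ : ℵ₀ ≤ κ)
    (hrank : κ ≤ Module.rank K V) (horbits : κ ≤ #(MulAction.orbitRel.Quotient G X))
    (hS : IsHamelLabelling K G S) (hcard : #S < κ) (hg : g ≠ g⁻¹) (u v : V) :
    ∃ N : Set (X × V), N.Finite ∧ IsHamelLabelling K G (S ∪ N) ∧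
      (u, v) ∈ span K (conjGraph (S ∪ N) g) := by
  obtain ⟨N, p, p', hN, hSN, hpp', hu, hv, hne⟩ :=
    exists_union_sub_notMem_image_snd hκ hrank horbits hS hcard hg u v
  have hadd {W : Submodule K (V × V)} (h : (u - p, v - p') ∈ W) (h' : (p, p') ∈ W) :
      (u, v) ∈ W := by
    simpa only [Prod.mk_add_mk, sub_add_cancel] using W.add_mem h h'
  by_cases hspan : (u - p, v - p') ∈ span K (conjGraph (S ∪ N) g)
  · exact ⟨N, hN, hSN, hadd hspan (subset_span hpp')⟩
  · have hcard' := (mk_union_lt_of_finite hκ hcard hN).trans_le horbits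
    obtain ⟨N', hN', hSN', hgraph, -⟩ :=
      hSN.exists_union_conjGraph_eq_insert hcard' hg hu hv hne hspan
    rw [union_assoc] at hSN' hgraph
    refine ⟨N ∪ N', hN.union hN', hSN', ?_⟩
    rw [hgraph]
    exact hadd (subset_span (mem_insert _ _)) (subset_span (mem_insert_of_mem _ hpp'))

end IsHamelLabelling
end Extension

/-- Hamel functions on a vector space `V` over `K`: the graph of `f` is a basis of `V × V`. For
`K = ℚ` and `V = ℝ` this is `IsHamelFunction`, with independence of the graph stated as
`LinearIndepOn` for the identity. -/
def IsHamelMap (K : Type*) {V : Type*} [Semiring K] [AddCommMonoid V] [Module K V] (f : V → V) :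
    Prop :=
  LinearIndepOn K id (univ.graphOn f) ∧ span K (univ.graphOn f) = ⊤

lemma isHamelMap_iff_isHamelFunction {f : ℝ → ℝ} : IsHamelMap ℚ f ↔ IsHamelFunction f := by
  rw [IsHamelMap, graphOn_univ_eq_range]
  rfl

lemma IsHamelMap.perm_ne_one {K V : Type*} [Semiring K] [Nontrivial K] [AddCommMonoid V]
    [Module K V] {σ : Equiv.Perm V} (h : IsHamelMap K σ) : σ ≠ 1 := by
  rintro rfl
  exact h.1.ne_zero (i := (0, 0)) ⟨0, mem_univ _, rfl⟩ rfl

section Existence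

variable {K : Type*} {V : Type u} [DivisionRing K] [NeZero (2 : K)] [AddCommGroup V] [Module K V]

theorem exists_isHamelLabelling {G X : Type u} [Group G] [MulAction G X] [IsCancelSMul G X]
    (hV : ℵ₀ ≤ #V) (hrank : Module.rank K V = #V) (hX : #X ≤ #V)
    (horbits : #V ≤ #(MulAction.orbitRel.Quotient G X)) (hG : ∀ g : G, g ≠ 1 → g ≠ g⁻¹) :
    ∃ S : Set (X × V), IsHamelLabelling K G S ∧ (∀ x, x ∈ Prod.fst '' S) ∧
      (∀ p, p ∈ Prod.snd '' S) ∧ ∀ g : G, g ≠ 1 → span K (conjGraph S g) = ⊤ := by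
  have : Infinite (MulAction.orbitRel.Quotient G X) := aleph0_le_mk_iff.1 (hV.trans horbits)
  have : Nonempty X := (Quotient.mk_surjective (s := MulAction.orbitRel G X)).nonempty
  let Sat : X ⊕ V ⊕ {g : G // g ≠ 1} × V × V → Set (X × V) → Prop
    | .inl x, S => x ∈ Prod.fst '' S
    | .inr (.inl p), S => p ∈ Prod.snd '' S
    | .inr (.inr (g, q)), S => q ∈ span K (conjGraph S (g : G))
  have hτ : #(X ⊕ V ⊕ {g : G // g ≠ 1} × V × V) = #V :=
    mk_sum_sum_prod_prod hV hX ((mk_subtype_le _).trans ((mk_le_mk_of_isCancelSMul G X).trans hX))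
  have hmono : ∀ t, Monotone (Sat t)
    | .inl _, _, _, h => fun hx => image_mono h hx
    | .inr (.inl _), _, _, h => fun hp => image_mono h hp
    | .inr (.inr (g, _)), _, _, h => fun hq => span_mono (conjGraph_mono (g : G) h) hq
  have hext : ∀ t S, IsHamelLabelling K G S → #S < #V →
      ∃ N : Set (X × V), N.Finite ∧ IsHamelLabelling K G (S ∪ N) ∧ Sat t (S ∪ N)
    | .inl x, _, hS, hcard => hS.exists_union_mem_image_fst (hcard.trans_eq hrank.symm) x
    | .inr (.inl p), _, hS, hcard => hS.exists_union_mem_image_snd (hcard.trans_le horbits) p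
    | .inr (.inr (g, u, v)), _, hS, hcard =>
      hS.exists_union_mem_span_conjGraph hV hrank.ge horbits hcard (hG g g.2) u v
  obtain ⟨S, hS, hSat⟩ := exists_forall_of_finite_extensions (hτ ▸ hV) hmono
    (fun C hC => IsHamelLabelling.sUnion hC.directedOn) (hτ ▸ hext)
  exact ⟨S, hS, fun x => hSat (.inl x), fun p => hSat (.inr (.inl p)), fun g hg =>
    eq_top_iff'.2 fun q => hSat (.inr (.inr (⟨g, hg⟩, q)))⟩

theorem exists_equiv_isHamelMap_conj {G X : Type u} [Group G] [MulAction G X] [IsCancelSMul G X]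
    (hV : ℵ₀ ≤ #V) (hrank : Module.rank K V = #V) (hX : #X ≤ #V)
    (horbits : #V ≤ #(MulAction.orbitRel.Quotient G X)) (hG : ∀ g : G, g ≠ 1 → g ≠ g⁻¹) :
    ∃ e : X ≃ V, ∀ g : G, g ≠ 1 → IsHamelMap K fun v => e (g • e.symm v) := by
  obtain ⟨S, hS, hfst, hsnd, hspan⟩ := exists_isHamelLabelling hV hrank hX horbits hG
  obtain ⟨e, he⟩ := exists_equiv_range_eq_graphOn_univ (f := (Subtype.val : S → X × V))
    (fun x => let ⟨q, hq, hqx⟩ := hfst x; ⟨⟨q, hq⟩, hqx⟩)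
    (fun p => let ⟨q, hq, hqp⟩ := hsnd p; ⟨⟨q, hq⟩, hqp⟩)
    (fun {q r} => ⟨fun h => congrArg Prod.snd (hS.injOn_fst q.2 r.2 h),
      fun h => congrArg Prod.fst (hS.injOn_snd q.2 r.2 h)⟩)
  rw [Subtype.range_coe] at he
  subst he
  refine ⟨e, fun g hg => ?_⟩
  rw [IsHamelMap, ← conjGraph_graphOn_univ]
  exact ⟨hS.linearIndepOn g hg, hspan g hg⟩

theorem exists_monoidHom_perm_isHamelMap {G : Type u} [Group G] (hV : ℵ₀ ≤ #V)
    (hrank : Module.rank K V = #V) (hGV : #G ≤ #V) (hG : ∀ g : G, g ≠ 1 → g ≠ g⁻¹) :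
    ∃ F : G →* Equiv.Perm V, ∀ g, g ≠ 1 → IsHamelMap K (F g) := by
  have hX : #(Σ _ : V, G) ≤ #V := by
    rw [mk_sigma, sum_const']
    exact mul_le_of_le hV le_rfl hGV
  obtain ⟨e, he⟩ := exists_equiv_isHamelMap_conj (K := K) hV hrank hX (mk_le_mk_quotient_sigma _) hG
  exact ⟨e.permCongrHom.toMonoidHom.comp (MulAction.toPermHom G _), he⟩

end Existence

theorem stmt_0_general {K : Type*} {V ι : Type u} [DivisionRing K] [NeZero (2 : K)]
    [AddCommGroup V] [Module K V] (hV : ℵ₀ ≤ #V) (hrank : Module.rank K V = #V) (hι : #ι ≤ #V) :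
    ∃ f : ι → Equiv.Perm V, Function.Injective (FreeGroup.lift f) ∧
      ∀ w : FreeGroup ι, w ≠ 1 → IsHamelMap K (FreeGroup.lift f w) := by
  have hcard : #(FreeGroup ι) ≤ #V := (mk_freeGroup_le ι).trans (max_le hι hV)
  obtain ⟨F, hF⟩ := exists_monoidHom_perm_isHamelMap hV hrank hcard fun w hw => self_ne_inv.2 hw
  have hlift : FreeGroup.lift (F ∘ FreeGroup.of) = F := by ext; simp
  refine ⟨F ∘ FreeGroup.of, ?_, hlift.symm ▸ hF⟩
  rw [hlift, injective_iff_map_eq_one]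
  exact fun w => not_imp_not.1 fun hw => (hF w hw).perm_ne_one

theorem stmt_0 :
    ∃ (I : Type) (_ : Cardinal.mk I = Cardinal.continuum) (f : I → Equiv.Perm ℝ),
      Function.Injective (FreeGroup.lift f) ∧
        ∀ w : FreeGroup I, w ≠ 1 → IsHamelFunction ⇑(FreeGroup.lift f w) := by
  simp only [← isHamelMap_iff_isHamelFunction]
  exact ⟨ℝ, mk_real, stmt_0_general (mk_real ▸ aleph0_le_continuum)
    (Real.rank_rat_real.trans mk_real.symm) le_rfl⟩
end

section
/- Every function g : ℝ → ℝ can be written as a composition g = f₃ ∘ f₂ ∘ f₁ of three Hamel functions f₁, f₂, f₃ : ℝ → ℝ. -/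
/-!
Let `u` be a basis of an infinite-dimensional space `V` with `dim V = #V`. Its complement has
`dim V` elements, so it indexes bases of every space isomorphic to `V`. If `b` is such a basis and
`L` is linear, then the function equal to `L` on `u` and to `L + b` off `u` is Hamel: two shears
carry the product basis built from `u` and `b` to its graph. This leaves enough freedom to choose

* an injective Hamel function `f₁` such that some basis `v` of `V` avoids its range;
* a Hamel function `f₂` that maps the complement of `v` bijectively onto `v`;
* a Hamel function `f₃` with arbitrarily prescribed values on `v`.

The values of `f₃` are then chosen so that `f₃ ∘ f₂ ∘ f₁ = g`. To find `f₁`, identify `V` with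
`V × V`, let `L x = (x, 0)`, and take for `b` a basis of `V × V` whose members have pairwise
distinct nonzero second coordinates. Then `f₁` takes values in each `V × {y}`, `y ≠ 0`, at most
once, so it omits enough points to span `V × V`.
-/

open Set Cardinal Module
open Function (Injective extend)

/-- A function `f : V → W` between `K`-modules is Hamel if its graph is a basis of `V × W`. The
basis is indexed by `V` itself, its member at `x` being the point `(x, f x)` of the graph. -/
def IsHamel (K : Type*) {V W : Type*} [Ring K] [AddCommGroup V] [Module K V] [AddCommGroup W]
    [Module K W] (f : V → W) : Prop :=
  ∃ B : Basis V K (V × W), ∀ x, B x = (x, f x)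

section HamelFunctions

variable {ι K V W W' : Type*} [Ring K] [AddCommGroup V] [Module K V] [AddCommGroup W] [Module K W]
  [AddCommGroup W'] [Module K W']

theorem isHamelFunction_iff_isHamel (f : ℝ → ℝ) : IsHamelFunction f ↔ IsHamel ℚ f := by
  have graph_injective : Injective fun x => (x, f x) := fun _ _ h => congrArg Prod.fst h
  have linearIndependent_graph_iff : LinearIndependent ℚ ((↑) : graph f → ℝ × ℝ) ↔
      LinearIndependent ℚ fun x => (x, f x) := linearIndepOn_id_range_iff graph_injective
  rw [IsHamelFunction, linearIndependent_graph_iff]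
  constructor
  · rintro ⟨hli, hspan⟩
    exact ⟨Basis.mk hli hspan.ge, Basis.mk_apply hli hspan.ge⟩
  · rintro ⟨B, hB⟩
    obtain hB : ⇑B = fun x => (x, f x) := funext hB
    exact ⟨hB ▸ B.linearIndependent, by rw [graph, ← hB, B.span_eq]⟩

theorem IsHamel.linearEquiv_comp {f : V → W} (hf : IsHamel K f) (e : W ≃ₗ[K] W') :
    IsHamel K (e ∘ f) := by
  obtain ⟨B, hB⟩ := hf
  exact ⟨B.map ((LinearEquiv.refl K V).prodCongr e), fun x => by simp [hB]⟩

theorem IsHamel.add_linearMap {f : V → W} (hf : IsHamel K f) (L : V →ₗ[K] W) :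
    IsHamel K fun x => f x + L x := by
  obtain ⟨B, hB⟩ := hf
  exact ⟨B.map ((LinearEquiv.refl K V).skewProd (LinearEquiv.refl K W) L), fun x => by simp [hB]⟩

theorem isHamel_extend_basis [Nontrivial K] (u : Basis ι K V) (b : Basis ↥(range u)ᶜ K W) :
    IsHamel K (extend Subtype.val b 0) := by
  classical
  let M : W →ₗ[K] V := b.constr ℕ Subtype.val
  let shear : (V × W) ≃ₗ[K] V × W := LinearEquiv.prodComm K V W ≪≫ₗ
    (LinearEquiv.refl K W).skewProd (LinearEquiv.refl K V) M ≪≫ₗ LinearEquiv.prodComm K W V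
  let B : Basis (ι ⊕ ↥(range u)ᶜ) K (V × W) := (u.prod b).map shear
  let e : ι ⊕ ↥(range u)ᶜ ≃ V :=
    ((Equiv.ofInjective u u.injective).sumCongr (Equiv.refl _)).trans (Equiv.Set.sumCompl (range u))
  have B_apply : ∀ k, B k = (e k, extend Subtype.val b 0 (e k)) := by
    rintro (i | x)
    · simp [B, shear, e]
    · simp [B, shear, e, M]
  exact ⟨B.reindex e, fun x => by simp [B_apply]⟩

theorem exists_isHamel_isHamel_comp_eqOn_compl_range [Nontrivial K] (v : Basis ι K V)
    (σ : ↥(range v)ᶜ ≃ ι) (h : V → V) :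
    ∃ f₂ f₃ : V → V, IsHamel K f₂ ∧ IsHamel K f₃ ∧ EqOn (f₃ ∘ f₂) h (range v)ᶜ := by
  let b : Basis ↥(range v)ᶜ K V := v.reindex σ.symm
  let L : V →ₗ[K] V := v.constr ℕ fun i => h (σ.symm i)
  have hb : IsHamel K (extend Subtype.val b 0) := isHamel_extend_basis v b
  refine ⟨_, _, hb, hb.add_linearMap L, fun y hy => ?_⟩
  have b_apply : extend Subtype.val b 0 y = v (σ ⟨y, hy⟩) := by
    simpa [b] using Subtype.val_injective.extend_apply b 0 ⟨y, hy⟩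
  simp [b_apply, L]

end HamelFunctions

section Spanning

variable {K V W : Type*} [Ring K] [AddCommGroup V] [Module K V] [AddCommGroup W] [Module K W]

theorem span_compl_eq_top_of_finite_fibers [Infinite V] [Nontrivial W] {S : Set (V × W)}
    (hS : ∀ y ≠ 0, {x | (x, y) ∈ S}.Finite) : Submodule.span K Sᶜ = ⊤ := by
  have mem_span_of_notMem {p : V × W} (hp : p ∉ S) : p ∈ Submodule.span K Sᶜ :=
    Submodule.subset_span hp
  have mem_horizontal (x : V) : (x, (0 : W)) ∈ Submodule.span K Sᶜ := by
    -- `(x, 0)` is a difference of two points outside `S` at the same height `y ≠ 0`.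
    obtain ⟨y, hy⟩ := exists_ne (0 : W)
    obtain ⟨a, ha⟩ :=
      ((hS y hy).union ((hS y hy).preimage (add_left_injective x).injOn)).exists_notMem
    obtain ⟨ha, hax⟩ : (a, y) ∉ S ∧ (a + x, y) ∉ S := by simpa using ha
    simpa using sub_mem (mem_span_of_notMem hax) (mem_span_of_notMem ha)
  refine Submodule.eq_top_iff'.2 fun ⟨x, y⟩ => ?_
  rcases eq_or_ne y 0 with rfl | hy
  · exact mem_horizontal x
  · obtain ⟨a, ha⟩ := (hS y hy).exists_notMem
    simpa using add_mem (mem_span_of_notMem ha) (mem_horizontal (x - a))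

end Spanning

section Bases

variable {ι K V W : Type*} [Ring K] [Nontrivial K] [AddCommGroup V] [Module K V]
  [AddCommGroup W] [Module K W]

theorem exists_injective_notMem_insert_zero_range [Infinite ι] (u : Basis ι K V) :
    ∃ h : ι → V, Injective h ∧ ∀ i, h i ∉ insert 0 (range u) := by
  obtain ⟨o⟩ : Nonempty (Option ι ≃ ι) :=
    Cardinal.eq.1 (mk_option.trans (add_one_eq (aleph0_le_mk ι)))
  refine ⟨fun i => u (o (some i)) - u (o none), fun i j hij => ?_, fun i => ?_⟩
  · exact Option.some_injective _ (o.injective (u.injective (sub_left_injective hij)))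
  · rintro (hi | ⟨j, hj⟩)
    · exact Option.some_ne_none i (o.injective (u.injective (sub_eq_zero.1 hi)))
    · -- The coordinates of a basis vector sum to `1`, those of a difference of two to `0`.
      have sumCoords_eq : (1 : K) = 1 - 1 := by
        simpa only [map_sub, Basis.sumCoords_self_apply] using congrArg u.sumCoords hj
      exact one_ne_zero (sumCoords_eq.trans (sub_self 1))

theorem exists_basis_prod_injective_snd [Infinite ι] (u : Basis ι K V) (t : Basis ι K W) :
    ∃ w : Basis (ι ⊕ ι) K (V × W), Injective (fun k => (w k).2) ∧ ∀ k, (w k).2 ≠ 0 := by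
  obtain ⟨h, h_injective, h_notMem⟩ := exists_injective_notMem_insert_zero_range t
  let w := (u.prod t).map
    ((LinearEquiv.refl K V).skewProd (LinearEquiv.refl K W) (u.constr ℕ h))
  have snd_w : (fun k => (w k).2) = Sum.elim h t := by
    ext (i | i) <;> simp [w]
  refine ⟨w, ?_, fun k => ?_⟩
  · rw [snd_w]
    exact h_injective.sumElim t.injective fun i j hij => h_notMem i (.inr ⟨j, hij.symm⟩)
  · rw [congrFun snd_w k]
    rcases k with i | i
    · exact fun hi => h_notMem i (.inl hi)
    · exact t.ne_zero i

theorem exists_isHamel_injective_finite_fibers (u : Basis ι K V)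
    (w : Basis ↥(range u)ᶜ K (V × W)) (w_injective : Injective fun x => (w x).2)
    (w_ne_zero : ∀ x, (w x).2 ≠ 0) :
    ∃ F : V → V × W, IsHamel K F ∧ Injective F ∧ ∀ y ≠ 0, {x | (x, y) ∈ range F}.Finite := by
  let F : V → V × W := fun x => extend Subtype.val w 0 x + LinearMap.inl K V W x
  have F_of_mem {x : V} (hx : x ∈ range u) : F x = (x, 0) := by
    obtain ⟨i, rfl⟩ := hx
    simp [F]
  have snd_F_of_notMem {x : V} (hx : x ∉ range u) : (F x).2 = (w ⟨x, hx⟩).2 := by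
    simpa [F] using congrArg Prod.snd (Subtype.val_injective.extend_apply w 0 ⟨x, hx⟩)
  have mem_iff (x : V) : x ∈ range u ↔ (F x).2 = 0 := by
    refine ⟨fun hx => by rw [F_of_mem hx], fun h => ?_⟩
    by_contra hx
    exact w_ne_zero _ (snd_F_of_notMem hx ▸ h)
  have eq_of_snd_eq {x y : V} (hx : (F x).2 ≠ 0) (hxy : (F x).2 = (F y).2) : x = y := by
    have hx' : x ∉ range u := (mem_iff x).not.2 hx
    have hy' : y ∉ range u := (mem_iff y).not.2 (hxy ▸ hx)
    rw [snd_F_of_notMem hx', snd_F_of_notMem hy'] at hxy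
    exact congrArg Subtype.val (w_injective hxy)
  refine ⟨F, (isHamel_extend_basis u w).add_linearMap _, fun x y hxy => ?_, fun z hz => ?_⟩
  · by_cases hx : (F x).2 = 0
    · have hy : (F y).2 = 0 := hxy ▸ hx
      rw [F_of_mem ((mem_iff x).2 hx), F_of_mem ((mem_iff y).2 hy)] at hxy
      exact congrArg Prod.fst hxy
    · exact eq_of_snd_eq hx (congrArg Prod.snd hxy)
  · refine Set.Subsingleton.finite ?_
    rintro a ⟨x, hx⟩ b ⟨y, hy⟩
    obtain rfl : x = y := eq_of_snd_eq (by rwa [hx]) (by rw [hx, hy])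
    exact congrArg Prod.fst (hx.symm.trans hy)

end Bases

section Cardinality

universe u v

variable {K : Type u} {V ι : Type v} [AddCommGroup V]

theorem infinite_of_basis_of_rank_eq_mk [Ring K] [StrongRankCondition K] [Module K V]
    (hV : Module.rank K V = #V) (u : Basis ι K V) : Infinite ι := by
  have := nontrivial_of_invariantBasisNumber K
  by_contra hι
  obtain ⟨e⟩ : Nonempty (ι ≃ V) := Cardinal.eq.1 (u.mk_eq_rank''.trans hV)
  have := not_infinite_iff_finite.1 hι
  obtain ⟨i, hi⟩ := (Finite.injective_iff_surjective_of_equiv e).1 u.injective 0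
  exact u.ne_zero i hi

theorem nonempty_compl_range_equiv_of_rank_eq_mk [Ring K] [StrongRankCondition K] [Module K V]
    (hV : Module.rank K V = #V) (u : Basis ι K V) : Nonempty (↥(range u)ᶜ ≃ ι) := by
  have := nontrivial_of_invariantBasisNumber K
  have := infinite_of_basis_of_rank_eq_mk hV u
  obtain ⟨h, h_injective, h_notMem⟩ := exists_injective_notMem_insert_zero_range u
  refine Cardinal.eq.1 (le_antisymm ?_ ?_)
  · exact (mk_set_le _).trans_eq (u.mk_eq_rank''.trans hV).symm
  · exact mk_le_of_injective (f := fun i => ⟨h i, fun hi => h_notMem i (.inr hi)⟩)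
      fun i j hij => h_injective (congrArg Subtype.val hij)

theorem exists_isHamel_injective_span_compl_range [DivisionRing K] [Module K V]
    (hV : Module.rank K V = #V) :
    ∃ f : V → V, IsHamel K f ∧ Injective f ∧ Submodule.span K (range f)ᶜ = ⊤ := by
  let u := Basis.ofVectorSpace K V
  have := infinite_of_basis_of_rank_eq_mk hV u
  have : Infinite V := Infinite.of_injective u u.injective
  have rank_prod_eq : Module.rank K (V × V) = Module.rank K V := by
    rw [rank_prod', hV, add_eq_self (aleph0_le_mk V)]
  obtain ⟨e⟩ : Nonempty ((V × V) ≃ₗ[K] V) := nonempty_linearEquiv_of_rank_eq rank_prod_eq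
  obtain ⟨σ⟩ := nonempty_compl_range_equiv_of_rank_eq_mk hV u
  obtain ⟨w, w_injective, w_ne_zero⟩ := exists_basis_prod_injective_snd u u
  let τ := (w.indexEquiv (u.map e.symm)).trans σ.symm
  obtain ⟨F, hF, F_injective, F_fibers⟩ := exists_isHamel_injective_finite_fibers u (w.reindex τ)
    (by simpa only [Basis.reindex_apply, Function.comp_def] using w_injective.comp τ.symm.injective)
    (by simp [w_ne_zero])
  refine ⟨e ∘ F, hF.linearEquiv_comp e, e.injective.comp F_injective, ?_⟩
  rw [range_comp, ← image_compl_eq e.bijective]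
  refine (Submodule.map_span e.toLinearMap _).symm.trans ?_
  rw [span_compl_eq_top_of_finite_fibers F_fibers, Submodule.map_top, LinearEquiv.range]

theorem stmt_8_general [DivisionRing K] [Module K V] (hV : Module.rank K V = #V) (g : V → V) :
    ∃ f₁ f₂ f₃ : V → V, IsHamel K f₁ ∧ IsHamel K f₂ ∧ IsHamel K f₃ ∧ g = f₃ ∘ f₂ ∘ f₁ := by
  obtain ⟨f₁, hf₁, f₁_injective, hspan⟩ := exists_isHamel_injective_span_compl_range hV
  let v := Basis.ofSpan hspan.ge
  have f₁_notMem (x : V) : f₁ x ∈ (range v)ᶜ :=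
    fun hx => Basis.ofSpan_subset hspan.ge hx (mem_range_self x)
  obtain ⟨σ⟩ := nonempty_compl_range_equiv_of_rank_eq_mk hV v
  obtain ⟨f₂, f₃, hf₂, hf₃, hcomp⟩ :=
    exists_isHamel_isHamel_comp_eqOn_compl_range v σ (extend f₁ g 0)
  refine ⟨f₁, f₂, f₃, hf₁, hf₂, hf₃, funext fun x => ?_⟩
  exact ((hcomp (f₁_notMem x)).trans (f₁_injective.extend_apply g 0 x)).symm

end Cardinality

theorem stmt_8 (g : ℝ → ℝ) :
    ∃ f₁ f₂ f₃ : ℝ → ℝ, IsHamelFunction f₁ ∧ IsHamelFunction f₂ ∧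
      IsHamelFunction f₃ ∧ g = f₃ ∘ f₂ ∘ f₁ := by
  simpa only [isHamelFunction_iff_isHamel] using
    stmt_8_general (Real.rank_rat_real.trans mk_real.symm) g
end

section
/- There exists a Hamel function f : ℝ → ℝ whose range {f x : x ∈ ℝ} is a ℚ-linearly independent subset of ℝ (with ℝ regarded as a vector space over ℚ). -/
/-!
Let `b` be a basis of `V` with range `C`, and suppose that `W` has a basis `b'` indexed by `Cᶜ`.
Let `f` be `b'` on `Cᶜ` and the constant `b' 0` on `C`. The linear map `L : W → V` with
`L (b' a) = a` shears the vectors `(0, b' a)` to the graph points `(a, b' a)`, and because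
`L (b' 0) = 0` it does not move `(c, b' 0)`; these are in turn obtained from the vectors `(c, 0)`
by a shear along `V → W`. So the graph of `f` is the image of the product basis of `V × W` under
an automorphism, while the range of `f` lies in that of `b'`.

Such a `b'` exists when the ranks of `V` and `W` are both `#V`: translation by a basis vector
embeds `C` into `Cᶜ`, so that `#Cᶜ = #V`.
-/

open Cardinal Module Set

universe v w

section Complement

variable {K V ι : Type*} [Ring K] [AddCommGroup V] [Module K V]

lemma zero_notMem_range_basis [Nontrivial K] (b : Basis ι K V) : (0 : V) ∉ range b := by
  rintro ⟨i, hi⟩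
  exact b.ne_zero i hi

lemma add_notMem_range_basis [Nontrivial K] (b : Basis ι K V) {x y : V} (hx : x ∈ range b)
    (hy : y ∈ range b) : x + y ∉ range b := by
  obtain ⟨i, rfl⟩ := hx
  obtain ⟨j, rfl⟩ := hy
  rintro ⟨k, hk⟩
  have sumCoords_eq : (1 : K) = 1 + 1 := by
    simpa only [map_add, Basis.sumCoords_self_apply] using congrArg b.sumCoords hk
  exact one_ne_zero (left_eq_add.mp sumCoords_eq)

lemma mk_range_basis_le_mk_compl [Nontrivial K] [Nonempty ι] (b : Basis ι K V) :
    #(range b) ≤ #↥(range b)ᶜ := by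
  let i := Classical.arbitrary ι
  let translate : range b → ↥(range b)ᶜ := fun c ↦
    ⟨c + b i, add_notMem_range_basis b c.2 (mem_range_self i)⟩
  refine mk_le_of_injective (f := translate) fun c d hcd ↦ Subtype.ext ?_
  exact add_right_cancel (congrArg Subtype.val hcd)

lemma mk_compl_range_basis [StrongRankCondition K] (b : Basis ι K V)
    (hV : Module.rank K V = #V) : #↥(range b)ᶜ = #V := by
  have : Nontrivial K := nontrivial_of_invariantBasisNumber K
  have mk_range : #(range b) = #V := b.reindexRange.mk_eq_rank''.trans hV
  have : Nonempty ι := by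
    rw [← range_nonempty_iff_nonempty (f := b), ← nonempty_coe_sort, ← mk_ne_zero_iff, mk_range]
    exact mk_ne_zero V
  exact (mk_set_le _).antisymm (mk_range ▸ mk_range_basis_le_mk_compl b)

end Complement

section Graph

variable {K V W ι : Type*} [Ring K]
  [AddCommGroup V] [Module K V] [AddCommGroup W] [Module K W]

/-- The automorphism of `V × W` that first shears along `s : V → W` and then along `t : W → V`. -/
def doubleShear (s : V →ₗ[K] W) (t : W →ₗ[K] V) : (V × W) ≃ₗ[K] V × W :=
  (LinearEquiv.refl K V).skewProd (LinearEquiv.refl K W) s ≪≫ₗ LinearEquiv.prodComm K V W ≪≫ₗ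
    (LinearEquiv.refl K W).skewProd (LinearEquiv.refl K V) t ≪≫ₗ LinearEquiv.prodComm K W V

lemma doubleShear_apply (s : V →ₗ[K] W) (t : W →ₗ[K] V) (p : V × W) :
    doubleShear s t p = (p.1 + t (p.2 + s p.1), p.2 + s p.1) :=
  rfl

variable [Nontrivial K] (b : Basis ι K V) (b' : Basis ↥(range b)ᶜ K W)

open Classical in
/-- The Hamel function `V → W` attached to a basis `b` of `V` and a basis `b'` of `W` indexed by
the vectors outside `b`: it sends such a vector to its element of `b'`, and every vector of `b` to
the element of `b'` with index `0`. -/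
noncomputable def hamelFun (x : V) : W :=
  if hx : x ∈ range b then b' ⟨0, zero_notMem_range_basis b⟩ else b' ⟨x, hx⟩

lemma hamelFun_of_mem {x : V} (hx : x ∈ range b) :
    hamelFun b b' x = b' ⟨0, zero_notMem_range_basis b⟩ :=
  dif_pos hx

lemma hamelFun_of_notMem {x : V} (hx : x ∉ range b) : hamelFun b b' x = b' ⟨x, hx⟩ :=
  dif_neg hx

lemma range_hamelFun_subset : range (hamelFun b b') ⊆ range b' := by
  rintro _ ⟨x, rfl⟩
  by_cases hx : x ∈ range b
  · exact ⟨_, (hamelFun_of_mem b b' hx).symm⟩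
  · exact ⟨_, (hamelFun_of_notMem b b' hx).symm⟩

open Classical in
/-- The graph of `hamelFun b b'` as a basis of `V × W`, indexed by the first coordinate. -/
noncomputable def hamelGraphBasis : Basis V K (V × W) :=
  ((b.reindexRange.prod b').map
    (doubleShear (b.sumCoords.smulRight (b' ⟨0, zero_notMem_range_basis b⟩))
      (b'.constr ℕ Subtype.val))).reindex (Equiv.Set.sumCompl (range b))

open Classical in
lemma hamelGraphBasis_apply (x : V) : hamelGraphBasis b b' x = (x, hamelFun b b' x) := by
  have constr_apply (a : ↥(range b)ᶜ) : b'.constr ℕ Subtype.val (b' a) = (a : V) :=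
    b'.constr_basis ℕ _ a
  by_cases hx : x ∈ range b
  · rw [hamelGraphBasis, Basis.reindex_apply, Equiv.Set.sumCompl_symm_apply_of_mem hx,
      hamelFun_of_mem b b' hx]
    obtain ⟨i, rfl⟩ := hx
    simp [doubleShear_apply, constr_apply, -Basis.coe_sumCoords]
  · rw [hamelGraphBasis, Basis.reindex_apply, Equiv.Set.sumCompl_symm_apply_of_notMem hx,
      hamelFun_of_notMem b b' hx]
    simp [doubleShear_apply, constr_apply]

lemma range_hamelGraphBasis :
    range (hamelGraphBasis b b') = range fun x ↦ (x, hamelFun b b' x) :=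
  congrArg range (funext (hamelGraphBasis_apply b b'))

end Graph

theorem stmt_10_general {K : Type*} {V : Type v} {W : Type w} [Ring K] [StrongRankCondition K]
    [AddCommGroup V] [Module K V] [Module.Free K V] [AddCommGroup W] [Module K W]
    [Module.Free K W] (hV : Module.rank K V = #V)
    (hW : lift.{v} (Module.rank K W) = lift.{w} #V) :
    ∃ f : V → W, LinearIndepOn K id (range fun x ↦ (x, f x)) ∧
      Submodule.span K (range fun x ↦ (x, f x)) = ⊤ ∧ LinearIndepOn K id (range f) := by
  have : Nontrivial K := nontrivial_of_invariantBasisNumber K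
  let b := Free.chooseBasis K V
  let c := Free.chooseBasis K W
  have mk_index : lift.{v} #(Free.ChooseBasisIndex K W) = lift.{w} #↥(range b)ᶜ := by
    rw [c.mk_eq_rank'', mk_compl_range_basis b hV, hW]
  obtain ⟨e⟩ := lift_mk_eq'.mp mk_index
  let b' := c.reindex e
  refine ⟨hamelFun b b', ?_, ?_, b'.linearIndependent.linearIndepOn_id.mono
    (range_hamelFun_subset b b')⟩
  · rw [← range_hamelGraphBasis]
    exact (hamelGraphBasis b b').linearIndependent.linearIndepOn_id
  · rw [← range_hamelGraphBasis]
    exact (hamelGraphBasis b b').span_eq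

theorem stmt_10 :
    ∃ f : ℝ → ℝ, IsHamelFunction f ∧
      LinearIndependent ℚ ((↑) : Set.range f → ℝ) := by
  have rank_eq : Module.rank ℚ ℝ = #ℝ := Real.rank_rat_real.trans mk_real.symm
  obtain ⟨f, graph_indep, graph_span, range_indep⟩ := stmt_10_general rank_eq (by rw [rank_eq])
  exact ⟨f, ⟨graph_indep, graph_span⟩, range_indep⟩
end
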